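/- Let M ≥ N ≥ 1, let μ^{N,M} = (μ_1^{N,M} ≤ … ≤ μ_N^{N,M}) be the ordered eigenvalues of a matrix from LUE(N,M), and let λ^N = (λ_1^N ≤ … ≤ λ_N^N) be the ordered eigenvalues of a matrix from GUE(N). Then the random vector ((μ_i^{N,M} − M)/√M)_{1≤i≤N} converges in distribution, as M → ∞, to (λ_i^N)_{1≤i≤N}. -/

import Mathlib

open MeasureTheory ProbabilityTheory Filter Topology Matrix
open scoped NNReal BigOperators

noncomputable section

instance {m n α : Type*} [MeasurableSpace α] : MeasurableSpace (Matrix m n α) :=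
  inferInstanceAs (MeasurableSpace (m → n → α))

/-- The law of the Gaussian Unitary Ensemble `GUE(N)`. -/
def gueMeasure (N : ℕ) : Measure (Matrix (Fin N) (Fin N) ℂ) :=
  Measure.map
    (fun g : Fin N × Fin N → ℝ × ℝ => Matrix.of fun i j =>
      if i = j then ((g (i, i)).1 : ℂ)
      else if i < j then (((g (i, j)).1 : ℂ) + ((g (i, j)).2 : ℂ) * Complex.I) / (Real.sqrt 2 : ℂ)
      else (((g (j, i)).1 : ℂ) - ((g (j, i)).2 : ℂ) * Complex.I) / (Real.sqrt 2 : ℂ))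
    (Measure.pi fun _ => (gaussianReal 0 1).prod (gaussianReal 0 1))

/-- The law of the Laguerre Unitary Ensemble `LUE(N, M)`, i.e. the law of `A Aᴴ` for `A` an
`N × M` matrix with i.i.d. standard complex Gaussian entries. -/
def lueMeasure (N M : ℕ) : Measure (Matrix (Fin N) (Fin N) ℂ) :=
  Measure.map
    (fun g : Fin N × Fin M → ℝ × ℝ =>
      (Matrix.of fun i j => (((g (i, j)).1 : ℂ) + ((g (i, j)).2 : ℂ) * Complex.I) / (Real.sqrt 2 : ℂ)) *
      (Matrix.of fun i j => (((g (i, j)).1 : ℂ) + ((g (i, j)).2 : ℂ) * Complex.I) / (Real.sqrt 2 : ℂ))ᴴ)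
    (Measure.pi fun _ => (gaussianReal 0 1).prod (gaussianReal 0 1))

/-- The eigenvalues of a Hermitian matrix, sorted in nondecreasing order (junk value `0`
if the matrix is not Hermitian). -/
def sortedEigs {N : ℕ} (A : Matrix (Fin N) (Fin N) ℂ) : Fin N → ℝ :=
  if h : A.IsHermitian then h.eigenvalues ∘ Tuple.sort h.eigenvalues else 0


theorem sortedEigs_eq_of_charpoly {N : ℕ} {A : Matrix (Fin N) (Fin N) ℂ} (hA : A.IsHermitian)
    {v : Fin N → ℝ} (hv : Monotone v)
    (h : A.charpoly = ∏ i, (Polynomial.X - Polynomial.C (v i : ℂ))) : sortedEigs A = v := by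
  have h1 := hA.roots_charpoly_eq_eigenvalues
  have h2 : A.charpoly.roots = Multiset.map (fun i => (v i : ℂ)) Finset.univ.val := by
    rw [h, Polynomial.roots_prod _ _ (by
      simp [Finset.prod_ne_zero_iff, Polynomial.X_sub_C_ne_zero])]
    simp
  have h3 : Multiset.map hA.eigenvalues Finset.univ.val = Multiset.map v Finset.univ.val := by
    have := congrArg (Multiset.map Complex.re) (h1.symm.trans h2)
    simpa [Multiset.map_map, Function.comp_def] using this
  have hs : Monotone (sortedEigs A) := by
    simp only [sortedEigs, hA, dif_pos]
    exact Tuple.monotone_sort _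
  have h4 : Multiset.map (sortedEigs A) Finset.univ.val = Multiset.map v Finset.univ.val := by
    rw [← h3]
    simp only [sortedEigs, hA, dif_pos]
    rw [← Multiset.map_map]
    congr 1
    exact congrArg Finset.val (Finset.map_univ_equiv (Tuple.sort hA.eigenvalues))
  have h5 : (List.ofFn (sortedEigs A)).Perm (List.ofFn v) := by
    rw [← Multiset.coe_eq_coe]
    simpa [Fin.univ_val_map] using h4
  have h6 := h5.eq_of_pairwise (le := (· ≤ ·)) (fun a b _ _ => le_antisymm)
    (List.sortedLE_iff_pairwise.1 (List.sortedLE_ofFn_iff.2 hs))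
    (List.sortedLE_iff_pairwise.1 (List.sortedLE_ofFn_iff.2 hv))
  exact List.ofFn_injective h6

theorem monotone_sortedEigs {N : ℕ} (A : Matrix (Fin N) (Fin N) ℂ) : Monotone (sortedEigs A) := by
  unfold sortedEigs
  split_ifs with hA
  · exact Tuple.monotone_sort _
  · exact monotone_const

theorem charpoly_eq_prod_sortedEigs {N : ℕ} {A : Matrix (Fin N) (Fin N) ℂ} (hA : A.IsHermitian) :
    A.charpoly = ∏ i, (Polynomial.X - Polynomial.C (sortedEigs A i : ℂ)) := by
  rw [hA.charpoly_eq]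
  simp only [sortedEigs, hA, dif_pos]
  exact (Equiv.prod_comp (Tuple.sort hA.eigenvalues)
    fun i => Polynomial.X - Polynomial.C (hA.eigenvalues i : ℂ)).symm

theorem eval_charpoly_eq_prod_sortedEigs {N : ℕ} {A : Matrix (Fin N) (Fin N) ℂ}
    (hA : A.IsHermitian) (x : ℂ) :
    (Matrix.scalar (Fin N) x - A).det = ∏ i, (x - (sortedEigs A i : ℂ)) := by
  rw [← Matrix.eval_charpoly, charpoly_eq_prod_sortedEigs hA, Polynomial.eval_prod]
  simp

theorem sortedEigs_eq_of_det {N : ℕ} {A : Matrix (Fin N) (Fin N) ℂ} (hA : A.IsHermitian)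
    {v : Fin N → ℝ} (hv : Monotone v)
    (h : ∀ x : ℂ, (Matrix.scalar (Fin N) x - A).det = ∏ i, (x - (v i : ℂ))) :
    sortedEigs A = v := by
  refine sortedEigs_eq_of_charpoly hA hv (Polynomial.funext fun x => ?_)
  rw [Matrix.eval_charpoly, h, Polynomial.eval_prod]
  simp

/-- The ordered eigenvalues of `(A - m) / s` are the affine images of those of `A`. -/
theorem sortedEigs_smul_sub {N : ℕ} {A : Matrix (Fin N) (Fin N) ℂ} (hA : A.IsHermitian)
    (m : ℝ) {s : ℝ} (hs : 0 < s) :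
    sortedEigs ((s⁻¹ : ℂ) • (A - Matrix.scalar (Fin N) (m : ℂ))) =
      fun i => (sortedEigs A i - m) / s := by
  have hs' : (s : ℂ) ≠ 0 := by exact_mod_cast hs.ne'
  refine sortedEigs_eq_of_det ?_ ?_ fun x => ?_
  · refine Matrix.IsHermitian.ext fun i j => ?_
    have := hA.apply i j
    by_cases hij : i = j
    · subst hij; simp at this; simp [this]
    · have hji : j ≠ i := fun h => hij h.symm
      simp [hij, hji, this]
  · intro i j hij
    have := monotone_sortedEigs A hij
    dsimp only
    gcongr
  · have : Matrix.scalar (Fin N) x - (s⁻¹ : ℂ) • (A - Matrix.scalar (Fin N) (m : ℂ)) =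
        (s⁻¹ : ℂ) • (Matrix.scalar (Fin N) (s * x + m) - A) := by
      ext i j
      by_cases hij : i = j
      · subst hij; simp; field_simp; ring
      · simp [hij]
    rw [this, Matrix.det_smul, eval_charpoly_eq_prod_sortedEigs hA, Fintype.card_fin,
      ← Fin.prod_const, ← Finset.prod_mul_distrib]
    refine Finset.prod_congr rfl fun i _ => ?_
    push_cast
    field_simp
    ring

/-- The squares of the eigenvalues sum to the squared Frobenius norm. -/
theorem sum_sq_sortedEigs {N : ℕ} {A : Matrix (Fin N) (Fin N) ℂ} (hA : A.IsHermitian) :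
    ∑ i, sortedEigs A i ^ 2 = ∑ i, ∑ j, ‖A i j‖ ^ 2 := by
  have h1 : (A * Aᴴ).trace = ((∑ i, ∑ j, ‖A i j‖ ^ 2 : ℝ) : ℂ) := by
    simp [Matrix.trace, Matrix.mul_apply, Complex.mul_conj, Complex.normSq_eq_norm_sq]
  have h2 : (A * Aᴴ).trace = ((∑ i, hA.eigenvalues i ^ 2 : ℝ) : ℂ) := by
    rw [hA.eq]
    conv_lhs => rw [hA.spectral_theorem]
    rw [← map_mul, Unitary.conjStarAlgAut_apply, Matrix.trace_mul_comm, ← mul_assoc]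
    simp [Matrix.trace, sq]
  have h3 : ∑ i, sortedEigs A i ^ 2 = ∑ i, hA.eigenvalues i ^ 2 := by
    simp only [sortedEigs, hA, dif_pos]
    exact Equiv.sum_comp (Tuple.sort hA.eigenvalues) fun i => hA.eigenvalues i ^ 2
  rw [h3]
  exact_mod_cast h2.symm.trans h1

theorem continuous_sortedEigs_comp {N : ℕ} {X : Type*} [TopologicalSpace X]
    [FirstCountableTopology X] {H : X → Matrix (Fin N) (Fin N) ℂ} (hH : Continuous H)
    (hherm : ∀ x, (H x).IsHermitian) : Continuous fun x => sortedEigs (H x) := by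
  rw [continuous_iff_seqContinuous]
  intro u x hu
  have hHu : Tendsto (fun n => H (u n)) atTop (𝓝 (H x)) := (hH.tendsto x).comp hu
  refine tendsto_of_subseq_tendsto fun ns hns => ?_
  have hF : Continuous fun A : Matrix (Fin N) (Fin N) ℂ => ∑ i, ∑ j, ‖A i j‖ ^ 2 := by fun_prop
  obtain ⟨R, hR⟩ := ((hF.tendsto _).comp (hHu.comp hns)).bddAbove_range
  have hbd : ∀ n, sortedEigs (H (u (ns n))) ∈ Set.Icc (fun _ => -(R + 1)) (fun _ : Fin N => R + 1) := by
    intro n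
    have h1 : ∑ i, sortedEigs (H (u (ns n))) i ^ 2 ≤ R := by
      rw [sum_sq_sortedEigs (hherm _)]
      exact hR ⟨n, rfl⟩
    have h2 : ∀ i, sortedEigs (H (u (ns n))) i ^ 2 ≤ R := fun i =>
      (Finset.single_le_sum (f := fun i => sortedEigs (H (u (ns n))) i ^ 2)
        (fun _ _ => sq_nonneg _) (Finset.mem_univ i)).trans h1
    exact ⟨fun i => by nlinarith [h2 i, sq_nonneg (sortedEigs (H (u (ns n))) i + 1)],
      fun i => by nlinarith [h2 i, sq_nonneg (sortedEigs (H (u (ns n))) i - 1)]⟩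
  obtain ⟨v, -, ms, hms, hv⟩ := isCompact_Icc.tendsto_subseq hbd
  refine ⟨ms, ?_⟩
  have hmono : Monotone v := fun i j hij =>
    le_of_tendsto_of_tendsto' (tendsto_pi_nhds.1 hv i) (tendsto_pi_nhds.1 hv j)
      fun n => monotone_sortedEigs _ hij
  have hlim : sortedEigs (H x) = v := by
    refine sortedEigs_eq_of_det (hherm x) hmono fun y => ?_
    have hl : Tendsto (fun n => (Matrix.scalar (Fin N) y - H (u (ns (ms n)))).det) atTop
        (𝓝 (Matrix.scalar (Fin N) y - H x).det) := by
      have hc : Continuous fun A : Matrix (Fin N) (Fin N) ℂ =>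
        (Matrix.scalar (Fin N) y - A).det := (continuous_const.sub continuous_id).matrix_det
      exact (hc.tendsto _).comp ((hHu.comp hns).comp hms.tendsto_atTop)
    have hr : Tendsto (fun n => ∏ i, (y - (sortedEigs (H (u (ns (ms n)))) i : ℂ))) atTop
        (𝓝 (∏ i, (y - (v i : ℂ)))) :=
      tendsto_finsetProd _ fun i _ => tendsto_const_nhds.sub
        ((Complex.continuous_ofReal.tendsto _).comp (tendsto_pi_nhds.1 hv i))
    refine tendsto_nhds_unique hl (hr.congr fun n => ?_)
    rw [eval_charpoly_eq_prod_sortedEigs (hherm _)]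
  rw [← hlim] at hv
  exact hv

/-- The Hermitian matrix with the given coordinates in an orthonormal basis. -/
def hermOfCoords {N : ℕ} (x : EuclideanSpace ℝ (Fin N × Fin N)) : Matrix (Fin N) (Fin N) ℂ :=
  Matrix.of fun i j =>
    if i = j then (x (i, i) : ℂ)
    else if i < j then ((x (i, j) : ℂ) + (x (j, i) : ℂ) * Complex.I) / (Real.sqrt 2 : ℂ)
    else ((x (j, i) : ℂ) - (x (i, j) : ℂ) * Complex.I) / (Real.sqrt 2 : ℂ)

/-- The coordinates of a Hermitian matrix, inverse to `hermOfCoords`. -/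
def coordsOfHerm {N : ℕ} (Y : Matrix (Fin N) (Fin N) ℂ) : EuclideanSpace ℝ (Fin N × Fin N) :=
  WithLp.toLp 2 fun p =>
    if p.1 = p.2 then (Y p.1 p.1).re
    else if p.1 < p.2 then Real.sqrt 2 * (Y p.1 p.2).re
    else Real.sqrt 2 * (Y p.2 p.1).im

theorem sqrt_two_ne_zero_complex : (Real.sqrt 2 : ℂ) ≠ 0 := by
  exact_mod_cast (Real.sqrt_pos.2 two_pos).ne'

theorem isHermitian_hermOfCoords {N : ℕ} (x : EuclideanSpace ℝ (Fin N × Fin N)) :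
    (hermOfCoords x).IsHermitian := by
  refine Matrix.IsHermitian.ext fun i j => ?_
  rcases lt_trichotomy i j with h | rfl | h
  · simp [hermOfCoords, h.ne, h.ne', h, h.not_gt, sub_eq_add_neg]
  · simp [hermOfCoords]
  · simp [hermOfCoords, h.ne, h.ne', h, h.not_gt, sub_eq_add_neg]

theorem continuous_hermOfCoords {N : ℕ} : Continuous (hermOfCoords (N := N)) := by
  refine continuous_matrix fun i j => ?_
  simp only [hermOfCoords, Matrix.of_apply]
  split_ifs <;> fun_prop

theorem measurable_coordsOfHerm {N : ℕ} : Measurable (coordsOfHerm (N := N)) := by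
  have hY : ∀ i j : Fin N, Measurable fun Y : Matrix (Fin N) (Fin N) ℂ => Y i j := fun i j =>
    (measurable_pi_apply j).comp (measurable_pi_apply i)
  refine (WithLp.measurable_toLp 2 _).comp (measurable_pi_lambda _ fun p => ?_)
  split_ifs
  · exact Complex.measurable_re.comp (hY _ _)
  · exact (Complex.measurable_re.comp (hY _ _)).const_mul _
  · exact (Complex.measurable_im.comp (hY _ _)).const_mul _

theorem hermOfCoords_coordsOfHerm {N : ℕ} {Y : Matrix (Fin N) (Fin N) ℂ} (hY : Y.IsHermitian) :
    hermOfCoords (coordsOfHerm Y) = Y := by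
  have h2 := sqrt_two_ne_zero_complex
  ext i j
  have hij := hY.apply i j
  rcases lt_trichotomy i j with h | rfl | h
  · simp only [hermOfCoords, coordsOfHerm, Matrix.of_apply, h.ne, h.ne', h, h.not_gt, if_true,
      if_false, Complex.ofReal_mul]
    field_simp
    exact Complex.re_add_im _
  · have := Complex.conj_eq_iff_re.1 hij
    simpa [hermOfCoords, coordsOfHerm] using this
  · simp only [hermOfCoords, coordsOfHerm, Matrix.of_apply, h.ne, h.ne', h, h.not_gt, if_true,
      if_false, Complex.ofReal_mul]
    field_simp
    rw [← hij]
    apply Complex.ext <;> simp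

theorem re_star_hermOfCoords_mul {N : ℕ} (t : EuclideanSpace ℝ (Fin N × Fin N))
    {Y : Matrix (Fin N) (Fin N) ℂ} (hY : Y.IsHermitian) (i j : Fin N) :
    (star (hermOfCoords t i j) * Y i j).re =
      (coordsOfHerm Y (i, j) * t (i, j) + coordsOfHerm Y (j, i) * t (j, i)) / 2 := by
  have h2 : Real.sqrt 2 * Real.sqrt 2 = 2 := Real.mul_self_sqrt zero_le_two
  have h3 : Real.sqrt 2 ≠ 0 := (Real.sqrt_pos.2 two_pos).ne'
  have hij := hY.apply i j
  rcases lt_trichotomy i j with h | rfl | h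
  · simp only [hermOfCoords, coordsOfHerm, Matrix.of_apply, h.ne, h.ne', h, h.not_gt, if_true,
      if_false]
    simp [Complex.div_ofReal_re, Complex.div_ofReal_im]
    field_simp
    rw [sq, h2]
    ring
  · simp [hermOfCoords, coordsOfHerm]
    ring
  · simp only [hermOfCoords, coordsOfHerm, Matrix.of_apply, h.ne, h.ne', h, h.not_gt, if_true,
      if_false]
    rw [← hij]
    simp [Complex.div_ofReal_re, Complex.div_ofReal_im]
    field_simp
    rw [sq, h2]
    ring

theorem sum_symmetrized {N : ℕ} (F : Fin N × Fin N → ℝ) :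
    ∑ p : Fin N × Fin N, (F (p.1, p.2) + F (p.2, p.1)) / 2 = ∑ p, F p := by
  have h : ∑ p : Fin N × Fin N, F (p.2, p.1) = ∑ p, F p :=
    Equiv.sum_comp (Equiv.prodComm (Fin N) (Fin N)) F
  rw [← Finset.sum_div, Finset.sum_add_distrib, h]
  simp

theorem inner_coordsOfHerm {N : ℕ} (t : EuclideanSpace ℝ (Fin N × Fin N))
    {Y : Matrix (Fin N) (Fin N) ℂ} (hY : Y.IsHermitian) :
    inner ℝ (coordsOfHerm Y) t =
      ∑ p : Fin N × Fin N, (star (hermOfCoords t p.1 p.2) * Y p.1 p.2).re := by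
  simp_rw [re_star_hermOfCoords_mul t hY]
  rw [sum_symmetrized fun p => coordsOfHerm Y p * t p]
  simp [PiLp.inner_apply, mul_comm]

theorem coordsOfHerm_hermOfCoords {N : ℕ} (t : EuclideanSpace ℝ (Fin N × Fin N)) :
    coordsOfHerm (hermOfCoords t) = t := by
  have h3 : Real.sqrt 2 ≠ 0 := (Real.sqrt_pos.2 two_pos).ne'
  ext ⟨i, j⟩
  rcases lt_trichotomy i j with h | rfl | h
  · simp [hermOfCoords, coordsOfHerm, h.ne, h, Complex.div_ofReal_re]
    field_simp
  · simp [hermOfCoords, coordsOfHerm]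
  · simp [hermOfCoords, coordsOfHerm, h.ne, h.ne', h, h.not_gt, Complex.div_ofReal_im]
    field_simp

theorem sum_normSq_hermOfCoords {N : ℕ} (t : EuclideanSpace ℝ (Fin N × Fin N)) :
    ∑ p : Fin N × Fin N, ‖hermOfCoords t p.1 p.2‖ ^ 2 = ‖t‖ ^ 2 := by
  have h := inner_coordsOfHerm t (isHermitian_hermOfCoords t)
  rw [coordsOfHerm_hermOfCoords, real_inner_self_eq_norm_sq] at h
  rw [h]
  refine Finset.sum_congr rfl fun p _ => ?_
  rw [← Complex.normSq_eq_norm_sq, Complex.star_def, ← Complex.normSq_eq_conj_mul_self,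
    Complex.ofReal_re]

theorem measurable_sortedEigs {N : ℕ} : Measurable (sortedEigs (N := N)) := by
  have hY : ∀ i j : Fin N, Measurable fun Y : Matrix (Fin N) (Fin N) ℂ => Y i j := fun i j =>
    (measurable_pi_apply j).comp (measurable_pi_apply i)
  have hs : MeasurableSet {A : Matrix (Fin N) (Fin N) ℂ | A.IsHermitian} := by
    have : {A : Matrix (Fin N) (Fin N) ℂ | A.IsHermitian} =
        ⋂ i, ⋂ j, {A | star (A j i) = A i j} := by
      ext A
      simp [Matrix.IsHermitian.ext_iff]
    rw [this]
    refine MeasurableSet.iInter fun i => MeasurableSet.iInter fun j => ?_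
    exact measurableSet_eq_fun (continuous_star.measurable.comp (hY j i)) (hY i j)
  have hc : Measurable fun x : EuclideanSpace ℝ (Fin N × Fin N) => sortedEigs (hermOfCoords x) :=
    (continuous_sortedEigs_comp continuous_hermOfCoords isHermitian_hermOfCoords).measurable
  classical
  have : sortedEigs (N := N) = fun A => if A ∈ {A : Matrix (Fin N) (Fin N) ℂ | A.IsHermitian} then
      sortedEigs (hermOfCoords (coordsOfHerm A)) else 0 := by
    ext1 A
    by_cases hA : A.IsHermitian
    · simp [hA, hermOfCoords_coordsOfHerm hA]
    · simp [hA, sortedEigs]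
  rw [this]
  exact Measurable.ite hs (hc.comp measurable_coordsOfHerm) measurable_const

/-- The standard complex Gaussian variable, as a function of two standard real ones. -/
def complexGaussian (w : ℝ × ℝ) : ℂ := ((w.1 : ℂ) + (w.2 : ℂ) * Complex.I) / (Real.sqrt 2 : ℂ)

/-- The law of a pair of independent standard real Gaussian variables. -/
abbrev gaussianPair : Measure (ℝ × ℝ) := (gaussianReal 0 1).prod (gaussianReal 0 1)

theorem continuous_complexGaussian : Continuous complexGaussian := by
  unfold complexGaussian
  fun_prop

theorem integrable_complexGaussian_pow (p q : ℕ) :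
    Integrable (fun w => complexGaussian w ^ p * star (complexGaussian w) ^ q) gaussianPair := by
  have hlin : MemLp complexGaussian (p + q : ℕ) gaussianPair := by
    have h1 : MemLp (fun w : ℝ × ℝ => (w.1 : ℂ)) (p + q : ℕ) gaussianPair :=
      ((memLp_id_gaussianReal' (μ := 0) (v := 1) (p + q : ℕ)
        (ENNReal.natCast_ne_top _)).comp_measurePreserving measurePreserving_fst).ofReal
    have h2 : MemLp (fun w : ℝ × ℝ => (w.2 : ℂ)) (p + q : ℕ) gaussianPair :=
      ((memLp_id_gaussianReal' (μ := 0) (v := 1) (p + q : ℕ)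
        (ENNReal.natCast_ne_top _)).comp_measurePreserving measurePreserving_snd).ofReal
    have := (h1.add (h2.mul_const Complex.I)).mul_const (Real.sqrt 2 : ℂ)⁻¹
    refine this.ae_eq (Filter.Eventually.of_forall fun w => ?_)
    simp [complexGaussian, div_eq_mul_inv]
  refine (hlin.integrable_norm_pow').mono' ?_ (Filter.Eventually.of_forall fun w => ?_)
  · have := continuous_complexGaussian
    exact Continuous.aestronglyMeasurable (by fun_prop)
  · simp [pow_add]

/-- Rotation by a right angle shows that the unbalanced moments vanish. -/
theorem integral_complexGaussian_eq_zero {p q : ℕ} (h : Complex.I ^ p * (-Complex.I) ^ q ≠ 1) :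
    ∫ w, complexGaussian w ^ p * star (complexGaussian w) ^ q ∂gaussianPair = 0 := by
  have hneg : MeasurePreserving (fun x : ℝ => -x) (gaussianReal 0 1) (gaussianReal 0 1) :=
    ⟨measurable_neg, by simp [gaussianReal_map_neg]⟩
  have hrot : MeasurePreserving (fun w : ℝ × ℝ => (-w.2, w.1)) gaussianPair gaussianPair :=
    (hneg.prod (MeasurePreserving.id _)).comp Measure.measurePreserving_swap
  have hcont := continuous_complexGaussian
  have hI : ∀ w : ℝ × ℝ, complexGaussian (-w.2, w.1) = Complex.I * complexGaussian w := by
    intro w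
    simp only [complexGaussian, Complex.ofReal_neg]
    ring_nf
    simp
  have key := integral_map (μ := gaussianPair) hrot.measurable.aemeasurable
    (f := fun w => complexGaussian w ^ p * star (complexGaussian w) ^ q)
    (Continuous.aestronglyMeasurable (by fun_prop))
  rw [hrot.map_eq] at key
  have h2 : ∀ w : ℝ × ℝ, complexGaussian (-w.2, w.1) ^ p * star (complexGaussian (-w.2, w.1)) ^ q =
      (Complex.I ^ p * (-Complex.I) ^ q) *
        (complexGaussian w ^ p * star (complexGaussian w) ^ q) := by
    intro w
    rw [hI]
    simp only [star_mul, Complex.star_def, Complex.conj_I, mul_pow]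
    ring
  simp_rw [h2, integral_const_mul] at key
  by_contra h0
  exact h (mul_right_cancel₀ h0 (by rw [one_mul]; exact key.symm))

theorem integral_sq_gaussianReal : ∫ x, x ^ 2 ∂(gaussianReal 0 1) = 1 := by
  have h := variance_fun_id_gaussianReal (μ := 0) (v := 1)
  rw [variance_eq_integral (by fun_prop)] at h
  simpa using h

theorem integral_pow_four_gaussianReal : ∫ x, x ^ 4 ∂(gaussianReal 0 1) = 3 := by
  have h := iteratedDeriv_mgf_zero (X := fun x => x) (μ := gaussianReal 0 1) (by simp) 4
  rw [mgf_fun_id_gaussianReal] at h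
  have hd : ∀ (P P' : ℝ → ℝ), (∀ t, HasDerivAt P (P' t) t) →
      deriv (fun t => P t * Real.exp (t ^ 2 / 2)) =
        fun t => (P' t + t * P t) * Real.exp (t ^ 2 / 2) := by
    intro P P' hP
    ext t
    have he : HasDerivAt (fun t : ℝ => Real.exp (t ^ 2 / 2)) (Real.exp (t ^ 2 / 2) * t) t := by
      convert ((hasDerivAt_pow 2 t).div_const 2).exp using 1
      simp
    rw [((hP t).fun_mul he).deriv]
    ring
  have h0 : (fun t : ℝ => Real.exp (0 * t + (1 : ℝ≥0) * t ^ 2 / 2)) =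
      fun t => 1 * Real.exp (t ^ 2 / 2) := by
    ext t; simp
  rw [h0] at h
  have e1 := hd (fun _ => 1) (fun _ => 0) fun t => hasDerivAt_const t 1
  have e2 := hd (fun t => t) (fun _ => 1) fun t => hasDerivAt_id t
  have e3 := hd (fun t => 1 + t ^ 2) (fun t => 2 * t) fun t => by
    simpa using (hasDerivAt_pow 2 t).const_add 1
  have e4 := hd (fun t => 3 * t + t ^ 3) (fun t => 3 + 3 * t ^ 2) fun t => by
    simpa using ((hasDerivAt_id t).const_mul 3).fun_add (hasDerivAt_pow 3 t)
  have f1 : deriv (fun t : ℝ => 1 * Real.exp (t ^ 2 / 2)) = fun t => t * Real.exp (t ^ 2 / 2) := by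
    rw [e1]; ext t; ring
  have f2 : deriv (fun t : ℝ => t * Real.exp (t ^ 2 / 2)) =
      fun t => (1 + t ^ 2) * Real.exp (t ^ 2 / 2) := by
    rw [e2]; ext t; ring
  have f3 : deriv (fun t : ℝ => (1 + t ^ 2) * Real.exp (t ^ 2 / 2)) =
      fun t => (3 * t + t ^ 3) * Real.exp (t ^ 2 / 2) := by
    rw [e3]; ext t; ring
  rw [iteratedDeriv_succ', f1, iteratedDeriv_succ', f2, iteratedDeriv_succ', f3,
    iteratedDeriv_succ', e4, iteratedDeriv_zero] at h
  simpa using h.symm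

theorem integrable_pow_gaussianReal (n : ℕ) : Integrable (fun x : ℝ => x ^ n) (gaussianReal 0 1) := by
  have h := (memLp_id_gaussianReal' (μ := 0) (v := 1) (n : ℕ)
    (ENNReal.natCast_ne_top _)).integrable_norm_pow'
  refine h.mono' (by fun_prop) (Filter.Eventually.of_forall fun x => ?_)
  simp

theorem integral_complexGaussian_pow_self {p : ℕ} (hp : p ≤ 2) :
    ∫ w, complexGaussian w ^ p * star (complexGaussian w) ^ p ∂gaussianPair = p.factorial := by
  have h2 : Real.sqrt 2 * Real.sqrt 2 = 2 := Real.mul_self_sqrt zero_le_two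
  have hw : ∀ w : ℝ × ℝ, complexGaussian w ^ p * star (complexGaussian w) ^ p =
      (((w.1 ^ 2 * w.2 ^ 0 + w.1 ^ 0 * w.2 ^ 2) / 2 : ℝ) : ℂ) ^ p := by
    intro w
    rw [← mul_pow, Complex.star_def, Complex.mul_conj]
    congr 2
    simp [complexGaussian, Complex.normSq_apply, h2]
    ring
  simp_rw [hw]
  have hint : ∀ m n : ℕ, Integrable (fun w : ℝ × ℝ => w.1 ^ m * w.2 ^ n) gaussianPair := fun m n =>
    (integrable_pow_gaussianReal m).mul_prod (integrable_pow_gaussianReal n)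
  have hval : ∀ m n : ℕ, ∫ w : ℝ × ℝ, w.1 ^ m * w.2 ^ n ∂gaussianPair =
      (∫ x, x ^ m ∂(gaussianReal 0 1)) * ∫ x, x ^ n ∂(gaussianReal 0 1) := fun m n =>
    integral_prod_mul (fun x : ℝ => x ^ m) (fun x : ℝ => x ^ n)
  interval_cases p
  · simp
  · simp_rw [pow_one]
    rw [integral_complex_ofReal, integral_div, integral_add (hint 2 0) (hint 0 2), hval, hval]
    simp only [integral_sq_gaussianReal]
    simp
  · have : ∀ w : ℝ × ℝ, (((w.1 ^ 2 * w.2 ^ 0 + w.1 ^ 0 * w.2 ^ 2) / 2 : ℝ) : ℂ) ^ 2 =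
        (((w.1 ^ 4 * w.2 ^ 0 + 2 * (w.1 ^ 2 * w.2 ^ 2) + w.1 ^ 0 * w.2 ^ 4) / 4 : ℝ) : ℂ) := by
      intro w
      push_cast
      ring
    simp_rw [this]
    rw [integral_complex_ofReal, integral_div,
      integral_add ((hint 4 0).fun_add ((hint 2 2).const_mul 2)) (hint 0 4),
      integral_add (hint 4 0) ((hint 2 2).const_mul 2), integral_const_mul, hval, hval, hval]
    simp only [integral_sq_gaussianReal, integral_pow_four_gaussianReal]
    simp
    norm_num

theorem integral_complexGaussian_pow {p q : ℕ} (hp : p ≤ 2) (hq : q ≤ 2) :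
    ∫ w, complexGaussian w ^ p * star (complexGaussian w) ^ q ∂gaussianPair =
      if p = q then (p.factorial : ℂ) else 0 := by
  split_ifs with h
  · subst h
    exact integral_complexGaussian_pow_self hp
  · refine integral_complexGaussian_eq_zero fun hI => ?_
    interval_cases p <;> interval_cases q <;>
      simp_all [Complex.ext_iff, pow_succ] <;> norm_num at hI

/-- The law of a vector of `N` independent pairs of standard real Gaussian variables. -/
abbrev gaussianVec (N : ℕ) : Measure (Fin N → ℝ × ℝ) := Measure.pi fun _ => gaussianPair

theorem prod_complexGaussian_pow_eq {N : ℕ} (z : Fin N → ℝ × ℝ) (i l j k : Fin N) :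
    ∏ m, (complexGaussian (z m) ^ ((if m = i then 1 else 0) + (if m = l then 1 else 0)) *
      star (complexGaussian (z m)) ^ ((if m = j then 1 else 0) + (if m = k then 1 else 0))) =
    (complexGaussian (z i) * star (complexGaussian (z j))) *
      star (complexGaussian (z k) * star (complexGaussian (z l))) := by
  simp only [pow_add, Finset.prod_mul_distrib]
  simp only [pow_ite, pow_one, pow_zero, Finset.prod_ite_eq', Finset.mem_univ, if_true, star_mul,
    star_star]
  ring

theorem integrable_complexGaussian_four {N : ℕ} (i l j k : Fin N) :
    Integrable (fun z : Fin N → ℝ × ℝ => (complexGaussian (z i) * star (complexGaussian (z j))) *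
      star (complexGaussian (z k) * star (complexGaussian (z l)))) (gaussianVec N) := by
  simp_rw [← prod_complexGaussian_pow_eq]
  exact Integrable.fintype_prod fun m => integrable_complexGaussian_pow _ _

/-- Wick's formula for the fourth moments. -/
theorem integral_complexGaussian_four {N : ℕ} (i l j k : Fin N) :
    ∫ z, (complexGaussian (z i) * star (complexGaussian (z j))) *
      star (complexGaussian (z k) * star (complexGaussian (z l))) ∂(gaussianVec N) =
    (if i = j then 1 else 0) * (if k = l then 1 else 0) +
      (if i = k then 1 else 0) * (if j = l then 1 else 0) := by
  simp_rw [← prod_complexGaussian_pow_eq]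
  rw [integral_fintype_prod_eq_prod (fun m w =>
    complexGaussian w ^ ((if m = i then 1 else 0) + (if m = l then 1 else 0)) *
      star (complexGaussian w) ^ ((if m = j then 1 else 0) + (if m = k then 1 else 0)))]
  have hval : ∀ m : Fin N, _ := fun m => integral_complexGaussian_pow
    (p := (if m = i then 1 else 0) + (if m = l then 1 else 0))
    (q := (if m = j then 1 else 0) + (if m = k then 1 else 0))
    (by split_ifs <;> norm_num) (by split_ifs <;> norm_num)
  simp_rw [hval]
  have hzero : ∀ m : Fin N, (if m = i then 1 else 0) + (if m = l then 1 else 0) ≠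
      (if m = j then 1 else 0) + (if m = k then 1 else 0) →
      ∏ m, (if (if m = i then 1 else 0) + (if m = l then 1 else 0) =
        (if m = j then 1 else 0) + (if m = k then 1 else 0) then
        ((((if m = i then 1 else 0) + (if m = l then 1 else 0) : ℕ).factorial : ℕ) : ℂ) else 0)
        = 0 := fun m hm => Finset.prod_eq_zero (Finset.mem_univ m) (if_neg hm)
  clear hval
  by_cases hil : i = l
  · subst hil
    by_cases hjk : i = j ∧ i = k
    · obtain ⟨rfl, rfl⟩ := hjk
      clear hzero
      simp only [if_true]
      rw [Finset.prod_eq_single i (fun m _ hm => by simp [hm]) (by simp)]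
      norm_num
    · rw [hzero i (by grind)]
      clear hzero
      grind
  · have hone : (∀ m : Fin N, (if m = i then 1 else 0) + (if m = l then 1 else 0) =
        (if m = j then 1 else 0) + (if m = k then 1 else 0)) →
        ∏ m, (if (if m = i then 1 else 0) + (if m = l then 1 else 0) =
        (if m = j then 1 else 0) + (if m = k then 1 else 0) then
        ((((if m = i then 1 else 0) + (if m = l then 1 else 0) : ℕ).factorial : ℕ) : ℂ) else 0)
        = 1 := by
      refine fun h => Finset.prod_eq_one fun m _ => ?_
      rw [if_pos (h m)]
      split_ifs with h1 h2
      · exact absurd (h1.symm.trans h2) hil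
      all_goals simp
    by_cases h1 : i = j ∧ k = l
    · rw [hone (by grind)]
      clear hzero hone
      grind
    · by_cases h2 : i = k ∧ j = l
      · rw [hone (by grind)]
        clear hzero hone
        grind
      · clear hone
        by_cases hi : (1 : ℕ) = (if i = j then 1 else 0) + (if i = k then 1 else 0)
        · rw [hzero l (by clear hzero; grind)]
          clear hzero
          grind
        · rw [hzero i (by clear hzero; grind)]
          clear hzero
          grind

theorem prod_complexGaussian_pow_eq_two {N : ℕ} (z : Fin N → ℝ × ℝ) (i j : Fin N) :
    ∏ m, (complexGaussian (z m) ^ (if m = i then 1 else 0) *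
      star (complexGaussian (z m)) ^ (if m = j then 1 else 0)) =
    complexGaussian (z i) * star (complexGaussian (z j)) := by
  simp only [Finset.prod_mul_distrib, pow_ite, pow_one, pow_zero, Finset.prod_ite_eq',
    Finset.mem_univ, if_true]

theorem integrable_complexGaussian_two {N : ℕ} (i j : Fin N) :
    Integrable (fun z : Fin N → ℝ × ℝ => complexGaussian (z i) * star (complexGaussian (z j)))
      (gaussianVec N) := by
  simp_rw [← prod_complexGaussian_pow_eq_two]
  exact Integrable.fintype_prod fun m => integrable_complexGaussian_pow _ _

theorem integral_complexGaussian_two {N : ℕ} (i j : Fin N) :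
    ∫ z, complexGaussian (z i) * star (complexGaussian (z j)) ∂(gaussianVec N) =
      if i = j then 1 else 0 := by
  simp_rw [← prod_complexGaussian_pow_eq_two]
  rw [integral_fintype_prod_eq_prod (fun m w =>
    complexGaussian w ^ (if m = i then 1 else 0) *
      star (complexGaussian w) ^ (if m = j then 1 else 0))]
  have hval : ∀ m : Fin N, _ := fun m => integral_complexGaussian_pow
    (p := if m = i then 1 else 0) (q := if m = j then 1 else 0)
    (by split_ifs <;> norm_num) (by split_ifs <;> norm_num)
  simp_rw [hval]
  split_ifs with hij
  · subst hij
    refine Finset.prod_eq_one fun m _ => ?_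
    split_ifs <;> simp_all
  · exact Finset.prod_eq_zero (Finset.mem_univ i) (if_neg (by simp [hij]))

/-- The centered rank-one matrix `a aᴴ - 1` built from a complex Gaussian vector `a`. -/
def centeredRankOne {N : ℕ} (z : Fin N → ℝ × ℝ) : Matrix (Fin N) (Fin N) ℂ :=
  Matrix.of fun i j =>
    complexGaussian (z i) * star (complexGaussian (z j)) - if i = j then 1 else 0

theorem isHermitian_centeredRankOne {N : ℕ} (z : Fin N → ℝ × ℝ) :
    (centeredRankOne z).IsHermitian := by
  refine Matrix.IsHermitian.ext fun i j => ?_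
  by_cases h : i = j
  · subst h; simp [centeredRankOne, mul_comm]
  · have h' : j ≠ i := fun e => h e.symm
    simp [centeredRankOne, h, h', mul_comm]

theorem integrable_centeredRankOne {N : ℕ} (p : Fin N × Fin N) :
    Integrable (fun z => centeredRankOne z p.1 p.2) (gaussianVec N) :=
  (integrable_complexGaussian_two _ _).sub (integrable_const _)

theorem integral_centeredRankOne {N : ℕ} (p : Fin N × Fin N) :
    ∫ z, centeredRankOne z p.1 p.2 ∂(gaussianVec N) = 0 := by
  simp only [centeredRankOne, Matrix.of_apply]
  rw [integral_sub (integrable_complexGaussian_two _ _) (integrable_const _),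
    integral_complexGaussian_two]
  simp

theorem centeredRankOne_mul_star {N : ℕ} (z : Fin N → ℝ × ℝ) (p r : Fin N × Fin N) :
    centeredRankOne z p.1 p.2 * star (centeredRankOne z r.1 r.2) =
      complexGaussian (z p.1) * star (complexGaussian (z p.2)) *
        star (complexGaussian (z r.1) * star (complexGaussian (z r.2))) -
      (if r.1 = r.2 then 1 else 0) *
        (complexGaussian (z p.1) * star (complexGaussian (z p.2))) -
      (if p.1 = p.2 then 1 else 0) *
        (complexGaussian (z r.2) * star (complexGaussian (z r.1))) +
      (if p.1 = p.2 then 1 else 0) * (if r.1 = r.2 then 1 else 0) := by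
  simp only [centeredRankOne, Matrix.of_apply, star_sub, star_mul, star_star, apply_ite star,
    star_one, star_zero]
  ring

theorem integrable_centeredRankOne_mul_star {N : ℕ} (p r : Fin N × Fin N) :
    Integrable (fun z => centeredRankOne z p.1 p.2 * star (centeredRankOne z r.1 r.2))
      (gaussianVec N) := by
  simp_rw [centeredRankOne_mul_star]
  exact (((integrable_complexGaussian_four _ _ _ _).sub
    ((integrable_complexGaussian_two _ _).const_mul _)).sub
    ((integrable_complexGaussian_two _ _).const_mul _)).add (integrable_const _)

/-- The entries of `a aᴴ - 1` are uncorrelated with unit variance. -/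
theorem integral_centeredRankOne_mul_star {N : ℕ} (p r : Fin N × Fin N) :
    ∫ z, centeredRankOne z p.1 p.2 * star (centeredRankOne z r.1 r.2) ∂(gaussianVec N) =
      if p = r then 1 else 0 := by
  simp_rw [centeredRankOne_mul_star]
  have i4 := integrable_complexGaussian_four p.1 r.2 p.2 r.1
  have i2 := (integrable_complexGaussian_two p.1 p.2).const_mul (if r.1 = r.2 then (1 : ℂ) else 0)
  have i2' := (integrable_complexGaussian_two r.2 r.1).const_mul (if p.1 = p.2 then (1 : ℂ) else 0)
  refine (integral_add ((i4.sub i2).sub i2') (integrable_const _)).trans ?_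
  rw [integral_sub' (i4.sub i2) i2', integral_sub' i4 i2, integral_const_mul, integral_const_mul,
    integral_complexGaussian_four, integral_complexGaussian_two, integral_complexGaussian_two]
  obtain ⟨i, j⟩ := p
  obtain ⟨k, l⟩ := r
  simp only [integral_const, probReal_univ, one_smul, Prod.mk.injEq, eq_comm (a := l)]
  split_ifs <;> simp_all

/-- The pairing of `t` with the coordinates of `a aᴴ - 1`. -/
def rankOnePairing {N : ℕ} (t : EuclideanSpace ℝ (Fin N × Fin N)) (z : Fin N → ℝ × ℝ) : ℝ :=
  inner ℝ (coordsOfHerm (centeredRankOne z)) t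

theorem ofReal_inner_coordsOfHerm {N : ℕ} (t : EuclideanSpace ℝ (Fin N × Fin N))
    {Y : Matrix (Fin N) (Fin N) ℂ} (hY : Y.IsHermitian) :
    ((inner ℝ (coordsOfHerm Y) t : ℝ) : ℂ) =
      ∑ p : Fin N × Fin N, star (hermOfCoords t p.1 p.2) * Y p.1 p.2 := by
  rw [inner_coordsOfHerm t hY, ← Complex.re_sum]
  refine Complex.conj_eq_iff_re.1 ?_
  rw [map_sum]
  refine Fintype.sum_equiv (Equiv.prodComm _ _) _ _ fun p => ?_
  simp only [Equiv.prodComm_apply, Prod.fst_swap, Prod.snd_swap, map_mul]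
  rw [← Complex.star_def, hY.apply, (isHermitian_hermOfCoords t).apply]

theorem ofReal_rankOnePairing {N : ℕ} (t : EuclideanSpace ℝ (Fin N × Fin N))
    (z : Fin N → ℝ × ℝ) : (rankOnePairing t z : ℂ) =
      ∑ p : Fin N × Fin N, star (hermOfCoords t p.1 p.2) * centeredRankOne z p.1 p.2 :=
  ofReal_inner_coordsOfHerm t (isHermitian_centeredRankOne z)

theorem integral_rankOnePairing {N : ℕ} (t : EuclideanSpace ℝ (Fin N × Fin N)) :
    ∫ z, rankOnePairing t z ∂(gaussianVec N) = 0 := by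
  rw [← Complex.ofReal_eq_zero, ← integral_complex_ofReal]
  simp_rw [ofReal_rankOnePairing]
  rw [integral_finsetSum _ fun p _ => (integrable_centeredRankOne p).const_mul _]
  simp [integral_const_mul, integral_centeredRankOne]

theorem integral_rankOnePairing_sq {N : ℕ} (t : EuclideanSpace ℝ (Fin N × Fin N)) :
    ∫ z, rankOnePairing t z ^ 2 ∂(gaussianVec N) = ‖t‖ ^ 2 := by
  rw [← Complex.ofReal_inj, ← integral_complex_ofReal]
  have hsq : ∀ z : Fin N → ℝ × ℝ, ((rankOnePairing t z ^ 2 : ℝ) : ℂ) =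
      ∑ p : Fin N × Fin N, ∑ r : Fin N × Fin N,
        (star (hermOfCoords t p.1 p.2) * hermOfCoords t r.1 r.2) *
          (centeredRankOne z p.1 p.2 * star (centeredRankOne z r.1 r.2)) := by
    intro z
    have h1 : ((rankOnePairing t z ^ 2 : ℝ) : ℂ) =
        (rankOnePairing t z : ℂ) * star (rankOnePairing t z : ℂ) := by
      simp [sq]
    rw [h1, ofReal_rankOnePairing, star_sum, Finset.sum_mul_sum]
    refine Finset.sum_congr rfl fun p _ => Finset.sum_congr rfl fun r _ => ?_
    simp only [star_mul, star_star]
    ring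
  simp_rw [hsq]
  rw [integral_finsetSum _ fun p _ => integrable_finsetSum _ fun r _ =>
    (integrable_centeredRankOne_mul_star p r).const_mul _]
  have hin : ∀ p : Fin N × Fin N, ∫ z, ∑ r : Fin N × Fin N,
      (star (hermOfCoords t p.1 p.2) * hermOfCoords t r.1 r.2) *
          (centeredRankOne z p.1 p.2 * star (centeredRankOne z r.1 r.2)) ∂(gaussianVec N) =
      ((‖hermOfCoords t p.1 p.2‖ ^ 2 : ℝ) : ℂ) := by
    intro p
    rw [integral_finsetSum _ fun r _ => (integrable_centeredRankOne_mul_star p r).const_mul _]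
    simp_rw [integral_const_mul, integral_centeredRankOne_mul_star]
    simp only [mul_ite, mul_one, mul_zero, Finset.sum_ite_eq, Finset.mem_univ, if_true]
    rw [Complex.star_def, ← Complex.normSq_eq_conj_mul_self, Complex.normSq_eq_norm_sq]
  simp_rw [hin]
  rw [← Complex.ofReal_sum, sum_normSq_hermOfCoords]

theorem measurable_centeredRankOne {N : ℕ} : Measurable (centeredRankOne (N := N)) := by
  refine measurable_pi_lambda _ fun i => measurable_pi_lambda _ fun j => ?_
  have h := continuous_complexGaussian
  exact Continuous.measurable (by simp only [centeredRankOne, Matrix.of_apply]; fun_prop)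

theorem measurable_rankOnePairing {N : ℕ} (t : EuclideanSpace ℝ (Fin N × Fin N)) :
    Measurable (rankOnePairing t) :=
  (measurable_coordsOfHerm.comp measurable_centeredRankOne).inner_const

theorem tendsto_charFun_rankOnePairing_pow {N : ℕ} (t : EuclideanSpace ℝ (Fin N × Fin N)) :
    Tendsto (fun n : ℕ => charFun ((gaussianVec N).map (rankOnePairing t)) (Real.sqrt n)⁻¹ ^ n)
      atTop (𝓝 (Complex.exp (-(‖t‖ : ℂ) ^ 2 / 2))) := by
  have hm := measurable_rankOnePairing t
  rcases eq_or_ne t 0 with rfl | ht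
  · have h0 : rankOnePairing (0 : EuclideanSpace ℝ (Fin N × Fin N)) = fun _ => 0 := by
      ext z; simp [rankOnePairing]
    simp [h0, Measure.map_const, charFun_dirac]
  · have hn : ‖t‖ ≠ 0 := norm_ne_zero_iff.2 ht
    have key := tendsto_charFun_inv_sqrt_mul_pow (P := gaussianVec N)
      (X := fun z => ‖t‖⁻¹ * rankOnePairing t z) (hm.const_mul _).aemeasurable
      (by simp only [integral_const_mul, integral_rankOnePairing, mul_zero])
      (by
        simp only [Pi.pow_apply, mul_pow, integral_const_mul, integral_rankOnePairing_sq]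
        field_simp) ‖t‖
    refine key.congr fun n => ?_
    rw [charFun_map_mul_comp hm.aemeasurable]
    congr 2
    field_simp

/-- The matrix with independent standard complex Gaussian entries. -/
def gaussianMatrix {N M : ℕ} (g : Fin N × Fin M → ℝ × ℝ) : Matrix (Fin N) (Fin M) ℂ :=
  Matrix.of fun i j => complexGaussian (g (i, j))

/-- The centered and rescaled Wishart matrix. -/
def scaledWishart {N M : ℕ} (g : Fin N × Fin M → ℝ × ℝ) : Matrix (Fin N) (Fin N) ℂ :=
  (((Real.sqrt M : ℝ) : ℂ)⁻¹) •
    (gaussianMatrix g * (gaussianMatrix g)ᴴ - Matrix.scalar (Fin N) ((M : ℝ) : ℂ))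

theorem map_curry_pi_gaussianVec (N M : ℕ) :
    (Measure.pi fun _ : Fin M => gaussianVec N).map
      (fun (h : Fin M → Fin N → ℝ × ℝ) (p : Fin N × Fin M) => h p.2 p.1) =
      Measure.pi fun _ : Fin N × Fin M => gaussianPair := by
  refine (Measure.pi_eq fun s hs => ?_).symm
  have hm : Measurable fun (h : Fin M → Fin N → ℝ × ℝ) (p : Fin N × Fin M) => h p.2 p.1 :=
    measurable_pi_lambda _ fun p => (measurable_pi_apply p.1).comp (measurable_pi_apply p.2)
  rw [Measure.map_apply hm (MeasurableSet.univ_pi hs)]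
  have hpre : (fun (h : Fin M → Fin N → ℝ × ℝ) (p : Fin N × Fin M) => h p.2 p.1) ⁻¹'
      Set.univ.pi s = Set.univ.pi fun k => Set.univ.pi fun i => s (i, k) := by
    ext h
    simp only [Set.mem_preimage, Set.mem_univ_pi, Prod.forall]
    exact forall_comm
  rw [hpre, Measure.pi_pi]
  simp_rw [Measure.pi_pi]
  rw [Fintype.prod_prod_type_right]

theorem gaussianMatrix_mul_conjTranspose_sub {N M : ℕ} (g : Fin N × Fin M → ℝ × ℝ) :
    gaussianMatrix g * (gaussianMatrix g)ᴴ - Matrix.scalar (Fin N) ((M : ℝ) : ℂ) =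
      ∑ k, centeredRankOne fun i => g (i, k) := by
  ext i j
  rw [Matrix.sum_apply]
  simp only [Matrix.sub_apply, Matrix.mul_apply, gaussianMatrix, Matrix.conjTranspose_apply,
    Matrix.of_apply, centeredRankOne, Finset.sum_sub_distrib, Matrix.scalar_apply,
    Matrix.diagonal_apply]
  congr 1
  split_ifs <;> simp

theorem isHermitian_gaussianMatrix_mul {N M : ℕ} (g : Fin N × Fin M → ℝ × ℝ) :
    (gaussianMatrix g * (gaussianMatrix g)ᴴ).IsHermitian :=
  Matrix.isHermitian_mul_conjTranspose_self _

theorem isHermitian_scaledWishart {N M : ℕ} (g : Fin N × Fin M → ℝ × ℝ) :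
    (scaledWishart g).IsHermitian := by
  rw [scaledWishart, gaussianMatrix_mul_conjTranspose_sub]
  refine Matrix.IsHermitian.ext fun i j => ?_
  simp only [Matrix.smul_apply, Matrix.sum_apply, smul_eq_mul, star_mul', star_sum,
    (isHermitian_centeredRankOne _).apply]
  simp

theorem inner_coordsOfHerm_scaledWishart {N M : ℕ} (t : EuclideanSpace ℝ (Fin N × Fin N))
    (g : Fin N × Fin M → ℝ × ℝ) :
    inner ℝ (coordsOfHerm (scaledWishart g)) t =
      ∑ k, (Real.sqrt M)⁻¹ * rankOnePairing t fun i => g (i, k) := by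
  rw [← Complex.ofReal_inj, ofReal_inner_coordsOfHerm t (isHermitian_scaledWishart g)]
  push_cast
  simp_rw [ofReal_rankOnePairing, Finset.mul_sum]
  rw [Finset.sum_comm]
  refine Finset.sum_congr rfl fun p _ => ?_
  rw [scaledWishart, gaussianMatrix_mul_conjTranspose_sub, Matrix.smul_apply, Matrix.sum_apply,
    smul_eq_mul, Finset.mul_sum, Finset.mul_sum]
  exact Finset.sum_congr rfl fun k _ => by ring

theorem measurable_gaussianMatrix_mul {N M : ℕ} :
    Measurable fun g : Fin N × Fin M → ℝ × ℝ => gaussianMatrix g * (gaussianMatrix g)ᴴ := by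
  refine measurable_pi_lambda _ fun i => measurable_pi_lambda _ fun j => ?_
  have h := continuous_complexGaussian
  refine Continuous.measurable ?_
  simp only [Matrix.mul_apply, gaussianMatrix, Matrix.conjTranspose_apply, Matrix.of_apply]
  fun_prop

theorem measurable_scaledWishart {N M : ℕ} :
    Measurable (scaledWishart : (Fin N × Fin M → ℝ × ℝ) → Matrix (Fin N) (Fin N) ℂ) := by
  refine measurable_pi_lambda _ fun i => measurable_pi_lambda _ fun j => ?_
  have h := continuous_complexGaussian
  refine Continuous.measurable ?_
  simp only [scaledWishart, Matrix.smul_apply, Matrix.sub_apply, Matrix.mul_apply, gaussianMatrix,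
    Matrix.conjTranspose_apply, Matrix.of_apply]
  fun_prop

theorem charFun_map_scaledWishart (N M : ℕ) (t : EuclideanSpace ℝ (Fin N × Fin N)) :
    charFun ((Measure.pi fun _ : Fin N × Fin M => gaussianPair).map
      fun g => coordsOfHerm (scaledWishart g)) t =
      charFun ((gaussianVec N).map (rankOnePairing t)) (Real.sqrt M)⁻¹ ^ M := by
  have hm : Measurable fun (h : Fin M → Fin N → ℝ × ℝ) (p : Fin N × Fin M) => h p.2 p.1 :=
    measurable_pi_lambda _ fun p => (measurable_pi_apply p.1).comp (measurable_pi_apply p.2)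
  have hW : Measurable fun g : Fin N × Fin M → ℝ × ℝ => coordsOfHerm (scaledWishart g) :=
    measurable_coordsOfHerm.comp measurable_scaledWishart
  have hP := measurable_rankOnePairing t
  rw [← map_curry_pi_gaussianVec, Measure.map_map hW hm, charFun_apply,
    integral_map (hW.comp hm).aemeasurable (by fun_prop), charFun_apply_real,
    integral_map hP.aemeasurable (by fun_prop)]
  simp only [Function.comp_apply, inner_coordsOfHerm_scaledWishart, Complex.ofReal_sum,
    Finset.sum_mul, Complex.exp_sum]
  rw [integral_fintype_prod_eq_prod fun (_ : Fin M) (z : Fin N → ℝ × ℝ) =>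
    Complex.exp (((Real.sqrt M)⁻¹ * rankOnePairing t z : ℝ) * Complex.I)]
  simp

/-- The coordinates of the GUE matrix in terms of the defining Gaussian pairs. -/
def gueCoords {N : ℕ} (g : Fin N × Fin N → ℝ × ℝ) : EuclideanSpace ℝ (Fin N × Fin N) :=
  WithLp.toLp 2 fun p => if p.1 ≤ p.2 then (g p).1 else (g (p.2, p.1)).2

theorem measurable_gueCoords {N : ℕ} : Measurable (gueCoords (N := N)) := by
  refine (WithLp.measurable_toLp 2 _).comp (measurable_pi_lambda _ fun p => ?_)
  split_ifs
  · exact measurable_fst.comp (measurable_pi_apply p)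
  · exact measurable_snd.comp (measurable_pi_apply _)

theorem sum_ite_le_eq_sum_add_ite_lt {N : ℕ} (F G : Fin N × Fin N → ℝ) :
    ∑ p : Fin N × Fin N, (if p.1 ≤ p.2 then F p else G p) =
      ∑ p : Fin N × Fin N, ((if p.1 ≤ p.2 then F p else 0) + if p.1 < p.2 then G p.swap else 0) := by
  have h : ∑ p : Fin N × Fin N, (if p.1 < p.2 then G p.swap else 0) =
      ∑ p : Fin N × Fin N, if p.2 < p.1 then G p else 0 :=
    Fintype.sum_equiv (Equiv.prodComm _ _) _ _ fun p => rfl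
  rw [Finset.sum_add_distrib, h, ← Finset.sum_add_distrib]
  refine Finset.sum_congr rfl fun p _ => ?_
  by_cases hp : p.1 ≤ p.2
  · simp [hp, hp.not_gt]
  · simp [hp, not_le.1 hp]

theorem inner_gueCoords {N : ℕ} (g : Fin N × Fin N → ℝ × ℝ)
    (t : EuclideanSpace ℝ (Fin N × Fin N)) :
    inner ℝ (gueCoords g) t = ∑ p : Fin N × Fin N,
      ((if p.1 ≤ p.2 then t p else 0) * (g p).1 +
        (if p.1 < p.2 then t p.swap else 0) * (g p).2) := by
  have h := sum_ite_le_eq_sum_add_ite_lt (fun p => t p * (g p).1)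
    fun p => t p * (g (p.2, p.1)).2
  simp only [PiLp.inner_apply, gueCoords, ite_mul, zero_mul]
  refine Eq.trans (Finset.sum_congr rfl fun p _ => ?_) (h.trans ?_)
  · split_ifs <;> simp
  · simp

theorem charFun_map_gueCoords {N : ℕ} (t : EuclideanSpace ℝ (Fin N × Fin N)) :
    charFun ((Measure.pi fun _ : Fin N × Fin N => gaussianPair).map gueCoords) t =
      Complex.exp (-(‖t‖ : ℂ) ^ 2 / 2) := by
  have hpair : ∀ a b : ℝ, ∫ w, Complex.exp ((a * w.1 + b * w.2 : ℝ) * Complex.I) ∂gaussianPair =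
      Complex.exp ((-(a ^ 2 + b ^ 2) / 2 : ℝ)) := by
    intro a b
    have hsplit : ∀ w : ℝ × ℝ, Complex.exp ((a * w.1 + b * w.2 : ℝ) * Complex.I) =
        Complex.exp (a * w.1 * Complex.I) * Complex.exp (b * w.2 * Complex.I) := by
      intro w
      rw [← Complex.exp_add]
      push_cast
      ring_nf
    simp_rw [hsplit]
    rw [integral_prod_mul (fun x : ℝ => Complex.exp (a * x * Complex.I))
      fun x : ℝ => Complex.exp (b * x * Complex.I), ← charFun_apply_real, ← charFun_apply_real,
      charFun_gaussianReal, charFun_gaussianReal, ← Complex.exp_add]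
    congr 1
    push_cast
    ring
  rw [charFun_apply, integral_map measurable_gueCoords.aemeasurable (by fun_prop)]
  simp only [inner_gueCoords, Complex.ofReal_sum, Finset.sum_mul, Complex.exp_sum]
  rw [integral_fintype_prod_eq_prod fun (p : Fin N × Fin N) (w : ℝ × ℝ) =>
    Complex.exp (((if p.1 ≤ p.2 then t p else 0) * w.1 +
        (if p.1 < p.2 then t p.swap else 0) * w.2 : ℝ) * Complex.I)]
  simp_rw [hpair]
  rw [← Complex.exp_sum, ← Complex.ofReal_sum, ← Finset.sum_div, Finset.sum_neg_distrib]
  have h := sum_ite_le_eq_sum_add_ite_lt (fun p => t p ^ 2) fun p => t p ^ 2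
  simp only [ite_self] at h
  rw [← Complex.ofReal_pow, EuclideanSpace.real_norm_sq_eq, h]
  simp [ite_pow]

theorem hermOfCoords_gueCoords {N : ℕ} (g : Fin N × Fin N → ℝ × ℝ) :
    hermOfCoords (gueCoords g) = Matrix.of fun i j =>
      if i = j then ((g (i, i)).1 : ℂ)
      else if i < j then (((g (i, j)).1 : ℂ) + ((g (i, j)).2 : ℂ) * Complex.I) / (Real.sqrt 2 : ℂ)
      else (((g (j, i)).1 : ℂ) - ((g (j, i)).2 : ℂ) * Complex.I) / (Real.sqrt 2 : ℂ) := by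
  ext i j
  rcases lt_trichotomy i j with h | rfl | h
  · simp [hermOfCoords, gueCoords, h.ne, h, h.le]
  · simp [hermOfCoords, gueCoords]
  · simp [hermOfCoords, gueCoords, h.ne', h, h.le, h.not_gt]
/-- **CLT for the eigenvalue vector.** If `μ₁ ≤ … ≤ μ_N` are the ordered eigenvalues of
`LUE(N,M)` and `λ₁ ≤ … ≤ λ_N` those of `GUE(N)`, then `((μ_i - M)/√M)_{1≤i≤N}` converges in
distribution to `(λ_i)_{1≤i≤N}` as `M → ∞`. -/
theorem lue_eigenvalues_clt_to_gue (N : ℕ) (hN : 1 ≤ N)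
    (f : BoundedContinuousFunction (Fin N → ℝ) ℝ) :
    Tendsto
      (fun M : ℕ =>
        ∫ A, f (fun i => (sortedEigs A i - M) / Real.sqrt M) ∂(lueMeasure N M))
      atTop (𝓝 (∫ A, f (sortedEigs A) ∂(gueMeasure N))) := by
  let π (M : ℕ) : Measure (Fin N × Fin M → ℝ × ℝ) := Measure.pi fun _ => gaussianPair
  have hW (M : ℕ) : Measurable fun g : Fin N × Fin M → ℝ × ℝ => coordsOfHerm (scaledWishart g) :=
    measurable_coordsOfHerm.comp measurable_scaledWishart
  let μ (M : ℕ) : ProbabilityMeasure (EuclideanSpace ℝ (Fin N × Fin N)) :=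
    ⟨(π M).map fun g => coordsOfHerm (scaledWishart g),
      Measure.isProbabilityMeasure_map (hW M).aemeasurable⟩
  let ν : ProbabilityMeasure (EuclideanSpace ℝ (Fin N × Fin N)) :=
    ⟨(π N).map gueCoords, Measure.isProbabilityMeasure_map measurable_gueCoords.aemeasurable⟩
  have hμν : Tendsto μ atTop (𝓝 ν) := by
    refine ProbabilityMeasure.tendsto_iff_tendsto_charFun.2 fun t => ?_
    change Tendsto (fun M => charFun ((π M).map fun g => coordsOfHerm (scaledWishart g)) t) atTop
      (𝓝 (charFun ((π N).map gueCoords) t))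
    simp only [π, charFun_map_scaledWishart, charFun_map_gueCoords]
    exact tendsto_charFun_rankOnePairing_pow t
  have hcont : Continuous fun x : EuclideanSpace ℝ (Fin N × Fin N) => sortedEigs (hermOfCoords x) :=
    continuous_sortedEigs_comp continuous_hermOfCoords isHermitian_hermOfCoords
  have hlim := ProbabilityMeasure.tendsto_iff_forall_integral_tendsto.1 hμν
    (f.compContinuous ⟨_, hcont⟩)
  have hgue : ∫ A, f (sortedEigs A) ∂(gueMeasure N) =
      ∫ x, f.compContinuous ⟨_, hcont⟩ x ∂(ν : Measure (EuclideanSpace ℝ (Fin N × Fin N))) := by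
    have hg : gueMeasure N = (π N).map fun g => hermOfCoords (gueCoords g) := by
      simp only [hermOfCoords_gueCoords]
      rfl
    have hmeas : Measurable fun g : Fin N × Fin N → ℝ × ℝ => hermOfCoords (gueCoords g) :=
      (measurable_pi_lambda _ fun i => measurable_pi_lambda _ fun j =>
        (continuous_hermOfCoords.matrix_elem i j).measurable).comp measurable_gueCoords
    have hf : Measurable fun A : Matrix (Fin N) (Fin N) ℂ => f (sortedEigs A) :=
      f.continuous.measurable.comp measurable_sortedEigs
    rw [hg, integral_map hmeas.aemeasurable hf.aestronglyMeasurable]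
    exact (integral_map measurable_gueCoords.aemeasurable
      (f.continuous.comp hcont).aestronglyMeasurable).symm
  rw [hgue]
  refine hlim.congr' ?_
  filter_upwards [eventually_gt_atTop 0] with M hM
  have hl : lueMeasure N M = (π M).map fun g => gaussianMatrix g * (gaussianMatrix g)ᴴ := rfl
  have hf : Measurable fun A : Matrix (Fin N) (Fin N) ℂ =>
      f fun i => (sortedEigs A i - M) / Real.sqrt M :=
    f.continuous.measurable.comp (measurable_pi_lambda _ fun i =>
      (((measurable_pi_apply i).comp measurable_sortedEigs).sub_const _).div_const _)
  rw [hl, integral_map measurable_gaussianMatrix_mul.aemeasurable hf.aestronglyMeasurable]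
  refine (integral_map (hW M).aemeasurable
    (f.continuous.comp hcont).aestronglyMeasurable).trans
    (integral_congr_ae (ae_of_all _ fun g => ?_))
  change f (sortedEigs (hermOfCoords (coordsOfHerm (scaledWishart g)))) = _
  rw [hermOfCoords_coordsOfHerm (isHermitian_scaledWishart g), scaledWishart,
    sortedEigs_smul_sub (isHermitian_gaussianMatrix_mul g) (M : ℝ)
      (Real.sqrt_pos.2 (Nat.cast_pos.2 hM))]

end
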